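/- Let L = ⊕_{i ≥ −1} L_i be a graded subalgebra of Vect_pol(E). Then N(L_{−1}) = ⊕_{i ≥ −1} n_i(L_{−1}) is an infinite-dimensional graded Lie subalgebra of Vect_pol(E) containing L. Moreover, N(L_{−1}) = Vect_pol(E) if and only if L_{−1} = Vect_{−1}(E). -/

import Mathlib

/-!
For a space `F` of constant vector fields, `n₋₁(F) = F`, and a field `Y` of weight `i + 1` lies in
`n_{i+1}(F)` exactly when `[F, Y] ⊆ n_i(F)`. Constant fields commute, so induction on the weights
turns the Jacobi identity into `[n_i(F), n_j(F)] ⊆ n_{i+j}(F)`. The Leibniz rule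
`[h, f Y] = f [h, Y] + h(f) Y` lowers either the weight of `Y` or the degree of `f`, so a double
induction shows that `N(F)` is stable under multiplication by polynomials. Since `N(F)` contains
the Euler field `ℰ`, the embedding `f ↦ f ℰ` of the polynomial ring makes it infinite-dimensional;
and if `F` contains every `∂_i`, then `N(F)` contains every `∑ f_i ∂_i`. Conversely, eigenspaces of
`ad ℰ` are independent, so `N(F)` is everything only if each `n_i(F)`, in particular
`n₋₁(F) = F`, fills its weight space.
-/

open MvPolynomial

/-- The Lie algebra of polynomial vector fields on `E = 𝕜^n`, realized as the
derivations of the polynomial algebra `𝕜[x_1, …, x_n]`. -/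
abbrev Vect (𝕜 : Type*) [Field 𝕜] (n : ℕ) : Type _ :=
  Derivation 𝕜 (MvPolynomial (Fin n) 𝕜) (MvPolynomial (Fin n) 𝕜)

variable (𝕜 : Type*) [Field 𝕜] (n : ℕ)

/-- The Euler vector field `ℰ = Σ x^j ∂_j`. -/
noncomputable def euler : Vect 𝕜 n :=
  MvPolynomial.mkDerivation 𝕜 fun i => MvPolynomial.X i

/-- `Vect_p(E)`: the eigenspace of `ad(ℰ)` for the eigenvalue `p`, i.e. the vector fields
with homogeneous coefficients of degree `p+1`. -/
noncomputable def VectP (p : ℤ) : Submodule 𝕜 (Vect 𝕜 n) :=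
  Module.End.eigenspace (LieAlgebra.ad 𝕜 (Vect 𝕜 n) (euler 𝕜 n)) ((p : 𝕜))

/-- A Lie subalgebra `L` of `Vect_pol(E)` is graded if `L = ⊕_{p ≥ -1} (L ∩ Vect_p(E))`. -/
def IsGradedSubalg (L : LieSubalgebra 𝕜 (Vect 𝕜 n)) : Prop :=
  L.toSubmodule = ⨆ p ≥ (-1 : ℤ), (L.toSubmodule ⊓ VectP 𝕜 n p)

/-- A Lie subalgebra `L` of `Vect_pol(E)` is maximal if the only subalgebras containing it
are `L` itself and `Vect_pol(E)`. -/
def IsMaxSubalg (L : LieSubalgebra 𝕜 (Vect 𝕜 n)) : Prop :=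
  ∀ L' : LieSubalgebra 𝕜 (Vect 𝕜 n), L ≤ L' → L' = L ∨ L' = ⊤

/-- The iterated adjoint action along a list: `iterAd [h₁, …, h_m] X = ⁅h₁, ⁅h₂, …, ⁅h_m, X⁆…⁆⁆`. -/
noncomputable def iterAd (l : List (Vect 𝕜 n)) : Module.End 𝕜 (Vect 𝕜 n) :=
  (l.map fun h => LieAlgebra.ad 𝕜 (Vect 𝕜 n) h).prod

/-- `n_i(F) = {X ∈ Vect_i(E) : ad(F)^{i+1} X ⊆ F}`: all iterated brackets of `X` with `i+1`
elements of `F` lie in `F`. -/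
noncomputable def nF (F : Submodule 𝕜 (Vect 𝕜 n)) (i : ℤ) : Submodule 𝕜 (Vect 𝕜 n) where
  carrier := {X | X ∈ VectP 𝕜 n i ∧
    ∀ l : List (Vect 𝕜 n), (∀ h ∈ l, h ∈ F) → l.length = (i + 1).toNat →
      iterAd 𝕜 n l X ∈ F}
  add_mem' := by
    rintro a b ⟨ha1, ha2⟩ ⟨hb1, hb2⟩
    refine ⟨add_mem ha1 hb1, fun l hl hlen => ?_⟩
    rw [map_add]
    exact add_mem (ha2 l hl hlen) (hb2 l hl hlen)
  zero_mem' := ⟨zero_mem _, fun l hl hlen => by rw [map_zero]; exact zero_mem F⟩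
  smul_mem' := by
    rintro c a ⟨ha1, ha2⟩
    refine ⟨Submodule.smul_mem _ c ha1, fun l hl hlen => ?_⟩
    rw [map_smul]
    exact Submodule.smul_mem F c (ha2 l hl hlen)

section LieRinehart

variable {R L : Type*} [CommRing R] [LieRing L] [LieAlgebra R L]

lemma lie_lie_eq_add_smul {M : Type*} [AddCommGroup M] [Module R M] [LieRingModule L M]
    [LieModule R L M] {e x : L} {m : M} {a b : R} (hx : ⁅e, x⁆ = a • x) (hm : ⁅e, m⁆ = b • m) :
    ⁅e, ⁅x, m⁆⁆ = (a + b) • ⁅x, m⁆ := by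
  rw [leibniz_lie, hx, hm, smul_lie, lie_smul, add_smul]

lemma lie_smul_eq_add_smul {A : Type*} [CommRing A] [Algebra R A] [Module A L]
    [LieRingModule L A] [LieRinehartRing A L] [IsScalarTower R A L] {e x : L} {f : A} {a b : R}
    (hf : ⁅e, f⁆ = a • f) (hx : ⁅e, x⁆ = b • x) : ⁅e, f • x⁆ = (a + b) • f • x := by
  have : SMulCommClass R A L := IsScalarTower.to_smulCommClass
  rw [LieRinehartRing.leibniz_smul_right, hf, hx, smul_comm f b, smul_assoc, ← add_smul, add_comm b]

end LieRinehart

lemma derivation_eq_sum_smul_pderiv {R σ : Type*} [CommSemiring R] [Fintype σ]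
    (D : Derivation R (MvPolynomial σ R) (MvPolynomial σ R)) : D = ∑ i, D (X i) • pderiv i := by
  classical
  refine derivation_ext fun j => ?_
  rw [← Derivation.coeFnAddMonoidHom_apply (∑ i, _), map_sum]
  simp [pderiv_X, Pi.single_apply]

section VectorFields

variable {𝕜 n} {f : MvPolynomial (Fin n) 𝕜} {Y Z : Vect 𝕜 n} {F : Submodule 𝕜 (Vect 𝕜 n)}
  {p q i j : ℤ}

lemma euler_apply_of_isHomogeneous {k : ℕ} (hf : f.IsHomogeneous k) :
    euler 𝕜 n f = (k : 𝕜) • f := by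
  rw [derivation_eq_sum_smul_pderiv (euler 𝕜 n), ← Derivation.coeFnAddMonoidHom_apply, map_sum,
    Nat.cast_smul_eq_nsmul, ← hf.sum_X_mul_pderiv]
  simp [euler]

lemma coeff_euler_apply (f : MvPolynomial (Fin n) 𝕜) (m : Fin n →₀ ℕ) :
    coeff m (euler 𝕜 n f) = m.degree * coeff m f := by
  induction f using MvPolynomial.induction_on' with
  | monomial u a =>
    rw [euler_apply_of_isHomogeneous (isHomogeneous_monomial a rfl), coeff_smul, coeff_monomial]
    split_ifs with h <;> simp [h]
  | add p q hp hq => rw [map_add, coeff_add, hp, hq, coeff_add, mul_add]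

lemma coeff_eq_zero_of_euler_apply [CharZero 𝕜] (hf : euler 𝕜 n f = (p : 𝕜) • f)
    {m : Fin n →₀ ℕ} (hm : (m.degree : ℤ) ≠ p) : coeff m f = 0 := by
  have hcoeff : (m.degree : 𝕜) * coeff m f = p * coeff m f := by
    rw [← coeff_euler_apply, hf, coeff_smul, smul_eq_mul]
  by_contra h
  exact hm (by exact_mod_cast mul_right_cancel₀ h hcoeff)

lemma isHomogeneous_of_euler_apply [CharZero 𝕜] {k : ℕ} (hf : euler 𝕜 n f = (k : 𝕜) • f) :
    f.IsHomogeneous k := by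
  intro m hm
  by_contra h
  refine hm (coeff_eq_zero_of_euler_apply (p := k) (mod_cast hf) ?_)
  rw [Finsupp.degree_eq_weight_one]
  exact_mod_cast h

lemma mem_VectP : Y ∈ VectP 𝕜 n p ↔ ⁅euler 𝕜 n, Y⁆ = (p : 𝕜) • Y := by
  rw [VectP, Module.End.mem_eigenspace_iff, LieAlgebra.ad_apply]

lemma euler_mem_VectP_zero : euler 𝕜 n ∈ VectP 𝕜 n 0 := by
  rw [mem_VectP, lie_self, Int.cast_zero, zero_smul]

lemma pderiv_mem_VectP_neg_one (i : Fin n) : pderiv i ∈ VectP 𝕜 n (-1) := by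
  rw [mem_VectP]
  refine derivation_ext fun j => ?_
  by_cases h : i = j <;> simp [Derivation.commutator_apply, euler, pderiv_X, h, eq_comm]

lemma euler_apply_of_mem_VectP (hY : Y ∈ VectP 𝕜 n p) (hf : euler 𝕜 n f = (q : 𝕜) • f) :
    euler 𝕜 n (Y f) = ((p + q : ℤ) : 𝕜) • Y f := by
  rw [Int.cast_add]
  exact lie_lie_eq_add_smul (mem_VectP.1 hY) hf

lemma lie_mem_VectP (hY : Y ∈ VectP 𝕜 n p) (hZ : Z ∈ VectP 𝕜 n q) :
    ⁅Y, Z⁆ ∈ VectP 𝕜 n (p + q) := by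
  rw [mem_VectP, Int.cast_add]
  exact lie_lie_eq_add_smul (M := Vect 𝕜 n) (mem_VectP.1 hY) (mem_VectP.1 hZ)

lemma smul_mem_VectP {k : ℕ} (hf : f.IsHomogeneous k) (hY : Y ∈ VectP 𝕜 n p) :
    f • Y ∈ VectP 𝕜 n (k + p) := by
  rw [mem_VectP, Int.cast_add, Int.cast_natCast]
  exact lie_smul_eq_add_smul (euler_apply_of_isHomogeneous hf) (mem_VectP.1 hY)

lemma iSupIndep_VectP [CharZero 𝕜] : iSupIndep (VectP 𝕜 n) :=
  (Module.End.eigenspaces_iSupIndep _).comp Int.cast_injective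

lemma VectP_eq_bot [CharZero 𝕜] (hp : p < -1) : VectP 𝕜 n p = ⊥ := by
  refine (Submodule.eq_bot_iff _).2 fun Y hY => derivation_ext fun j => ?_
  have hX : euler 𝕜 n (X j) = ((1 : ℤ) : 𝕜) • X j := by simp [euler]
  ext m
  exact coeff_eq_zero_of_euler_apply (euler_apply_of_mem_VectP hY hX) (by omega)

lemma lie_eq_zero_of_mem_VectP_neg_one [CharZero 𝕜] (hY : Y ∈ VectP 𝕜 n (-1))
    (hZ : Z ∈ VectP 𝕜 n (-1)) : ⁅Y, Z⁆ = 0 := by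
  have hYZ := lie_mem_VectP hY hZ
  rwa [VectP_eq_bot (by norm_num), Submodule.mem_bot] at hYZ

lemma isHomogeneous_apply_of_mem_VectP_neg_one [CharZero 𝕜] {k : ℕ} (hY : Y ∈ VectP 𝕜 n (-1))
    (hf : f.IsHomogeneous (k + 1)) : (Y f).IsHomogeneous k := by
  refine isHomogeneous_of_euler_apply ?_
  have hYf := euler_apply_of_mem_VectP (q := k + 1) hY
    (by simpa using euler_apply_of_isHomogeneous hf)
  simpa using hYf

lemma nF_le_VectP (F : Submodule 𝕜 (Vect 𝕜 n)) (i : ℤ) : nF 𝕜 n F i ≤ VectP 𝕜 n i :=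
  fun _ hY => hY.1

lemma nF_neg_one (hF : F ≤ VectP 𝕜 n (-1)) : nF 𝕜 n F (-1) = F := by
  refine le_antisymm (fun Y hY => ?_) fun Y hY => ⟨hF hY, fun l _ hl => ?_⟩
  · simpa [iterAd] using hY.2 [] (by simp) (by simp)
  · obtain rfl : l = [] := List.eq_nil_of_length_eq_zero (by simpa using hl)
    simpa [iterAd] using hY

lemma iterAd_concat (l : List (Vect 𝕜 n)) (h Y : Vect 𝕜 n) :
    iterAd 𝕜 n (l ++ [h]) Y = iterAd 𝕜 n l ⁅h, Y⁆ := by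
  simp [iterAd]

lemma mem_nF_add_one (hF : F ≤ VectP 𝕜 n (-1)) (hi : -1 ≤ i) :
    Y ∈ nF 𝕜 n F (i + 1) ↔ Y ∈ VectP 𝕜 n (i + 1) ∧ ∀ h ∈ F, ⁅h, Y⁆ ∈ nF 𝕜 n F i := by
  refine ⟨fun hY => ⟨hY.1, fun h hh => ⟨?_, fun l hl hlen => ?_⟩⟩,
    fun ⟨hY, hlie⟩ => ⟨hY, fun l hl hlen => ?_⟩⟩
  · simpa using lie_mem_VectP (hF hh) hY.1
  · rw [← iterAd_concat]
    refine hY.2 _ (by simpa [or_imp, forall_and] using ⟨hl, hh⟩) ?_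
    rw [List.length_append, List.length_singleton, hlen]
    omega
  · rcases l.eq_nil_or_concat' with rfl | ⟨l, h, rfl⟩
    · rw [List.length_nil] at hlen
      omega
    · simp only [List.mem_append, List.mem_singleton, List.length_append,
        List.length_singleton] at hl hlen
      rw [iterAd_concat]
      exact (hlie h (hl h (.inr rfl))).2 l (fun g hg => hl g (.inl hg)) (by omega)

lemma euler_mem_nF_zero (hF : F ≤ VectP 𝕜 n (-1)) : euler 𝕜 n ∈ nF 𝕜 n F 0 := by
  refine (mem_nF_add_one hF le_rfl).2 ⟨euler_mem_VectP_zero, fun h hh => ?_⟩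
  have hlie : ⁅h, euler 𝕜 n⁆ = h := by
    rw [← lie_skew, mem_VectP.1 (hF hh), Int.cast_neg, Int.cast_one]
    exact neg_eq_iff_eq_neg.2 (neg_one_smul 𝕜 h)
  rwa [hlie, nF_neg_one hF]

lemma lie_mem_nF [CharZero 𝕜] (hF : F ≤ VectP 𝕜 n (-1)) (hi : -1 ≤ i) (hj : -1 ≤ j)
    (hY : Y ∈ nF 𝕜 n F i) (hZ : Z ∈ nF 𝕜 n F j) : ⁅Y, Z⁆ ∈ nF 𝕜 n F (i + j) := by
  induction i, hi using Int.leInduction generalizing Y Z j with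
  | base =>
    cases j, hj using Int.leInduction with
    | base =>
      rw [lie_eq_zero_of_mem_VectP_neg_one hY.1 hZ.1]
      exact zero_mem _
    | succ j hj _ =>
      rw [nF_neg_one hF] at hY
      rw [neg_add_cancel_comm_assoc]
      exact ((mem_nF_add_one hF hj).1 hZ).2 Y hY
  | succ i hi ihi =>
    have hYF := ((mem_nF_add_one hF hi).1 hY).2
    induction j, hj using Int.leInduction generalizing Z with
    | base =>
      rw [nF_neg_one hF] at hZ
      rw [← lie_skew, add_neg_cancel_right]
      exact neg_mem (hYF Z hZ)
    | succ j hj ihj =>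
      have hZF := ((mem_nF_add_one hF hj).1 hZ).2
      have hdeg := lie_mem_VectP hY.1 hZ.1
      rw [← add_assoc] at hdeg ⊢
      refine (mem_nF_add_one hF (by omega)).2 ⟨hdeg, fun h hh => ?_⟩
      rw [LieRing.leibniz_lie]
      refine add_mem ?_ (ihj (hZF h hh))
      rw [add_right_comm, add_assoc]
      exact ihi (by omega) (hYF h hh) hZ

lemma smul_mem_nF [CharZero 𝕜] (hF : F ≤ VectP 𝕜 n (-1)) (hi : -1 ≤ i) {k : ℕ}
    (hf : f.IsHomogeneous k) (hY : Y ∈ nF 𝕜 n F i) : f • Y ∈ nF 𝕜 n F (k + i) := by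
  induction k generalizing f Y i with
  | zero =>
    obtain ⟨c, rfl⟩ : ∃ c, f = C c :=
      ⟨_, totalDegree_eq_zero_iff_eq_C.1 ((totalDegree_zero_iff_isHomogeneous _).2 hf)⟩
    rw [← algebraMap_eq, algebraMap_smul, Nat.cast_zero, zero_add]
    exact Submodule.smul_mem _ c hY
  | succ k ihk =>
    have smul_mem_of_smul_lie_mem {i : ℤ} (hi : -1 ≤ i) {Y : Vect 𝕜 n} (hY : Y ∈ nF 𝕜 n F i)
        (hlie : ∀ h ∈ F, f • ⁅h, Y⁆ ∈ nF 𝕜 n F (k + i)) :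
        f • Y ∈ nF 𝕜 n F ((k + 1 : ℕ) + i) := by
      have hdeg := smul_mem_VectP hf hY.1
      rw [Nat.cast_succ, add_right_comm] at hdeg ⊢
      refine (mem_nF_add_one hF (by omega)).2 ⟨hdeg, fun h hh => ?_⟩
      have hleibniz : ⁅h, f • Y⁆ = f • ⁅h, Y⁆ + h f • Y :=
        LieRinehartRing.leibniz_smul_right h Y f
      rw [hleibniz]
      exact add_mem (hlie h hh)
        (ihk hi (isHomogeneous_apply_of_mem_VectP_neg_one (hF hh) hf) hY)
    induction i, hi using Int.leInduction generalizing Y with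
    | base =>
      refine smul_mem_of_smul_lie_mem le_rfl hY fun h hh => ?_
      rw [lie_eq_zero_of_mem_VectP_neg_one (hF hh) hY.1, smul_zero]
      exact zero_mem _
    | succ i hi ihi =>
      refine smul_mem_of_smul_lie_mem (by omega) hY fun h hh => ?_
      have hfhY := ihi (((mem_nF_add_one hF hi).1 hY).2 h hh)
      rwa [Nat.cast_succ, add_assoc, add_comm 1] at hfhY

lemma nF_le_iSup [CharZero 𝕜] (F : Submodule 𝕜 (Vect 𝕜 n)) (i : ℤ) :
    nF 𝕜 n F i ≤ ⨆ j ≥ (-1 : ℤ), nF 𝕜 n F j := by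
  rcases lt_or_ge i (-1) with hi | hi
  · exact (nF_le_VectP F i).trans ((VectP_eq_bot hi).trans_le bot_le)
  · exact le_iSup₂_of_le i hi le_rfl

/-- The Lie subalgebra `N(F) = ⊕_{i ≥ -1} n_i(F)` attached to a space `F` of constant vector fields.
It is encoded as a supremum, which is a direct sum because the `Vect_i(E)` are independent. -/
noncomputable def NF [CharZero 𝕜] (hF : F ≤ VectP 𝕜 n (-1)) : LieSubalgebra 𝕜 (Vect 𝕜 n) where
  toSubmodule := ⨆ i ≥ (-1 : ℤ), nF 𝕜 n F i
  lie_mem' {Y Z} hY hZ := by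
    have hle : Submodule.map₂ (LieModule.toEnd 𝕜 (Vect 𝕜 n) (Vect 𝕜 n) : Vect 𝕜 n →ₗ[𝕜] _)
        (⨆ i ≥ (-1 : ℤ), nF 𝕜 n F i) (⨆ i ≥ (-1 : ℤ), nF 𝕜 n F i) ≤
          ⨆ i ≥ (-1 : ℤ), nF 𝕜 n F i := by
      simp only [Submodule.map₂_iSup_left, Submodule.map₂_iSup_right, iSup_le_iff,
        Submodule.map₂_le]
      exact fun j hj i hi Y hY Z hZ => nF_le_iSup F _ (lie_mem_nF hF hi hj hY hZ)
    exact Submodule.map₂_le.1 hle Y hY Z hZ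

lemma nF_le_NF [CharZero 𝕜] (hF : F ≤ VectP 𝕜 n (-1)) (i : ℤ) :
    nF 𝕜 n F i ≤ (NF hF).toSubmodule := nF_le_iSup F i

lemma isGradedSubalg_NF [CharZero 𝕜] (hF : F ≤ VectP 𝕜 n (-1)) : IsGradedSubalg 𝕜 n (NF hF) :=
  le_antisymm
    (iSup₂_mono fun i _ => le_inf (nF_le_NF hF i) (nF_le_VectP F i))
    (iSup₂_le fun _ _ => inf_le_left)

lemma smul_mem_NF [CharZero 𝕜] (hF : F ≤ VectP 𝕜 n (-1)) (f : MvPolynomial (Fin n) 𝕜)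
    (hY : Y ∈ NF hF) : f • Y ∈ NF hF := by
  have hle : (NF hF).toSubmodule ≤ (NF hF).toSubmodule.comap (Algebra.lsmul 𝕜 𝕜 (Vect 𝕜 n) f) := by
    refine iSup₂_le fun i hi Z hZ => ?_
    change f • Z ∈ NF hF
    rw [← sum_homogeneousComponent f, Finset.sum_smul]
    exact sum_mem fun k _ =>
      nF_le_NF hF _ (smul_mem_nF hF hi (homogeneousComponent_isHomogeneous k f) hZ)
  exact hle hY

lemma not_finiteDimensional_NF [CharZero 𝕜] (hn : 0 < n) (hF : F ≤ VectP 𝕜 n (-1)) :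
    ¬ FiniteDimensional 𝕜 (NF hF) := by
  intro hfin
  let i : Fin n := ⟨0, hn⟩
  have : Nonempty (Fin n) := ⟨i⟩
  let φ : MvPolynomial (Fin n) 𝕜 →ₗ[𝕜] (NF hF).toSubmodule :=
    ((LinearMap.toSpanSingleton _ _ (euler 𝕜 n)).restrictScalars 𝕜).codRestrict _
      fun f => smul_mem_NF hF f (nF_le_NF hF 0 (euler_mem_nF_zero hF))
  have hφ : Function.Injective φ := by
    intro f g h
    have hX : (f • euler 𝕜 n) (X i) = (g • euler 𝕜 n) (X i) :=
      congrArg (fun Z : (NF hF).toSubmodule => (Z : Vect 𝕜 n) (X i)) h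
    simpa [euler] using hX
  have : FiniteDimensional 𝕜 (NF hF).toSubmodule := hfin
  have : FiniteDimensional 𝕜 (MvPolynomial (Fin n) 𝕜) := .of_injective φ hφ
  exact not_finite_iff_infinite.2 inferInstance
    (Module.Finite.finite_basis (basisMonomials (Fin n) 𝕜))

lemma NF_eq_top_iff [CharZero 𝕜] (hF : F ≤ VectP 𝕜 n (-1)) :
    NF hF = ⊤ ↔ F = VectP 𝕜 n (-1) := by
  constructor
  · intro htop
    have hiSup : ⨆ i, nF 𝕜 n F i = ⊤ :=
      eq_top_mono (iSup₂_le_iSup _ _) (congrArg LieSubalgebra.toSubmodule htop)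
    have hnF := (iSupIndep_VectP.le_iff_eq_of_iSup_eq_top hiSup).1 (nF_le_VectP F)
    exact (nF_neg_one hF).symm.trans (congrFun hnF (-1))
  · refine fun hFeq => eq_top_iff.2 fun D _ => ?_
    rw [derivation_eq_sum_smul_pderiv D]
    refine sum_mem fun i _ => smul_mem_NF hF _ (nF_le_NF hF (-1) ?_)
    rw [nF_neg_one hF, hFeq]
    exact pderiv_mem_VectP_neg_one i

lemma inf_VectP_le_nF (L : LieSubalgebra 𝕜 (Vect 𝕜 n)) (hi : -1 ≤ i) :
    L.toSubmodule ⊓ VectP 𝕜 n i ≤ nF 𝕜 n (L.toSubmodule ⊓ VectP 𝕜 n (-1)) i := by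
  induction i, hi using Int.leInduction with
  | base => exact (nF_neg_one inf_le_right).ge
  | succ i hi ih =>
    refine fun Y hY => (mem_nF_add_one inf_le_right hi).2
      ⟨hY.2, fun h hh => ih ⟨L.lie_mem hh.1 hY.1, ?_⟩⟩
    simpa using lie_mem_VectP hh.2 hY.2

lemma le_NF_of_isGradedSubalg [CharZero 𝕜] {L : LieSubalgebra 𝕜 (Vect 𝕜 n)}
    (hL : IsGradedSubalg 𝕜 n L) :
    L ≤ NF (inf_le_right : L.toSubmodule ⊓ VectP 𝕜 n (-1) ≤ VectP 𝕜 n (-1)) :=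
  hL.trans_le (iSup₂_mono fun _ hi => inf_VectP_le_nF L hi)

theorem statement5_general [CharZero 𝕜] (hn : 0 < n) (L : LieSubalgebra 𝕜 (Vect 𝕜 n))
    (hgraded : IsGradedSubalg 𝕜 n L) :
    ∃ N : LieSubalgebra 𝕜 (Vect 𝕜 n),
      (N.toSubmodule = ⨆ i ≥ (-1 : ℤ), nF 𝕜 n (L.toSubmodule ⊓ VectP 𝕜 n (-1)) i) ∧
      IsGradedSubalg 𝕜 n N ∧
      ¬ FiniteDimensional 𝕜 N ∧
      L ≤ N ∧
      (N = ⊤ ↔ L.toSubmodule ⊓ VectP 𝕜 n (-1) = VectP 𝕜 n (-1)) :=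
  ⟨NF inf_le_right, rfl, isGradedSubalg_NF _, not_finiteDimensional_NF hn _,
    le_NF_of_isGradedSubalg hgraded, NF_eq_top_iff _⟩

end VectorFields

/-- Let `L = ⊕_{i ≥ -1} L_i` be a graded subalgebra of `Vect_pol(E)`.  Then
`N(L₋₁) = ⊕_{i ≥ -1} n_i(L₋₁)` is an infinite-dimensional graded Lie subalgebra of
`Vect_pol(E)` containing `L`; moreover `N(L₋₁) = Vect_pol(E)` iff `L₋₁ = Vect₋₁(E)`. -/
theorem statement5 (𝕜 : Type) [RCLike 𝕜] (n : ℕ) (hn : 0 < n)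
    (L : LieSubalgebra 𝕜 (Vect 𝕜 n)) (hgraded : IsGradedSubalg 𝕜 n L) :
    ∃ N : LieSubalgebra 𝕜 (Vect 𝕜 n),
      (N.toSubmodule = ⨆ i ≥ (-1 : ℤ), nF 𝕜 n (L.toSubmodule ⊓ VectP 𝕜 n (-1)) i) ∧
      IsGradedSubalg 𝕜 n N ∧
      ¬ FiniteDimensional 𝕜 N ∧
      L ≤ N ∧
      (N = ⊤ ↔ L.toSubmodule ⊓ VectP 𝕜 n (-1) = VectP 𝕜 n (-1)) :=
  statement5_general hn L hgraded
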